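/- Let (𝔩,𝔪) be a permissible pair with the algorithm notations in place. Then D(𝔩,𝔪) = |𝔪|, i.e. |ν(𝔩,𝔪)₁| − |ν(𝔩,𝔪)₂| + |ν(𝔩,𝔪)₃| equals the number of segments of 𝔪. -/

import Mathlib

/-!
Fix `i ∈ I`, put `v = e(Δ_i)`, and count the pairs of `ν₁`, `ν₂`, `ν₃` with first entry `i`.  Along
a cycle `j_t, i_1, …, i_s` of `σ` the begin points weakly decrease, while the end points of
`i_1, …, i_s, j_t` weakly increase, so the elements of end point `v` form one block of the cycle.
The pairs in `ν₁` and `ν₃` record the elements with begin point at least `b(Δ_i)` through which `σ`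
enters a block; the pairs in `ν₂` record those with begin point greater than `b(Δ_i)` through which
it leaves one.  A cycle has at most one entrance and at most one exit, so both are counted by their
depths.

The depths of the entrances are those of the exits together with `𝔡(i)`, which is not the depth of
an exit.  The essential point is that an entrance `x` of depth `t ≠ 𝔡(i)` has an exit in its cycle:

* `t > 𝔡(i)` is impossible: `Δ_i` lies weakly below `Δ_{j_t}`, so some `z` of depth `t` has
  `Δ_z ≪ Δ_i`; as `z` comes after `x` in the cycle, its end point is at least `v`, a contradiction.
* If `t < 𝔡(i)`, then `e(Δ_{j_t}) > e(Δ_{j_{𝔡(i)}}) ≥ v`, so the block ends before `j_t`.  The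
  begin point of its last element exceeds `b(Δ_i)`, since otherwise that element, lying weakly below
  `Δ_i`, would have depth at least `𝔡(i)`.

So every `i` contributes exactly `1` to `D(𝔩,𝔪)`.
-/

/-- A *segment* `Δ(a,b)`: a pair of integers `a ≤ b`.  `b` is the begin point
and `e` the end point. -/
structure Segment where
  b : ℤ
  e : ℤ
  le : b ≤ e

namespace Segment

/-- `Δ₁ ≪ Δ₂` : `b(Δ₁) < b(Δ₂)` and `e(Δ₁) < e(Δ₂)`. -/
def ll (Δ₁ Δ₂ : Segment) : Prop := Δ₁.b < Δ₂.b ∧ Δ₁.e < Δ₂.e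

/-- `Δ₁ ≺ Δ₂` : `b(Δ₁) < b(Δ₂)`, `e(Δ₁) < e(Δ₂)` and `e(Δ₁) ≥ b(Δ₂) - 1`. -/
def prec (Δ₁ Δ₂ : Segment) : Prop := Δ₁.b < Δ₂.b ∧ Δ₁.e < Δ₂.e ∧ Δ₂.b - 1 ≤ Δ₁.e

/-- `⁻Δ = Δ(a-1, b-1)`. -/
def shiftDown (Δ : Segment) : Segment := ⟨Δ.b - 1, Δ.e - 1, by have := Δ.le; omega⟩

end Segment

/-- The standing data of the inverse Knuth–Viennot algorithm: a nonzero multisegment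
`𝔪 = Σ_{i ∈ I} Δ_i` indexed by `I = Fin n` (linearly ordered compatibly with begin
points, ties broken by reversed end points), and a ladder multisegment
`𝔩 = Σ_{t ∈ J} Δ_{j_t}` indexed by `J = Fin l` (`jseg t` is the segment `Δ_{j_{t+1}}`,
enumerated so that `Δ_{j_l} ≪ ⋯ ≪ Δ_{j_1}`), such that the pair `(𝔩, 𝔪)` is
permissible. -/
structure KVData where
  n : ℕ
  l : ℕ
  npos : 0 < n
  lpos : 0 < l
  iseg : Fin n → Segment
  jseg : Fin l → Segment
  iOrder : ∀ i₁ i₂ : Fin n, i₂ < i₁ →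
    (iseg i₂).b < (iseg i₁).b ∨ ((iseg i₂).b = (iseg i₁).b ∧ (iseg i₁).e ≤ (iseg i₂).e)
  ladder : ∀ t t' : Fin l, t < t' → Segment.ll (jseg t') (jseg t)
  permissible : ∀ (m : ℕ) (c : Fin m → Fin n),
    (∀ r s : Fin m, r < s → Segment.ll (iseg (c s)) (iseg (c r))) →
    ∃ φ : Fin m → Fin l, StrictMono φ ∧
      ∀ t : Fin m, Segment.prec (Segment.shiftDown (iseg (c t))) (jseg (φ t))

namespace KVData

variable (D : KVData)

/-- The segment attached to an index in `I ⊔ J`. -/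
def segOf : Fin D.n ⊕ Fin D.l → Segment := Sum.elim D.iseg D.jseg

/-- The set `{t : ⁻Δ_i ≪ Δ_{j_t}}` (0-based positions in the ladder `𝔩`). -/
def dPrimeSet (i : Fin D.n) : Set ℕ :=
  {t : ℕ | ∃ h : t < D.l, Segment.ll (Segment.shiftDown (D.iseg i)) (D.jseg ⟨t, h⟩)}

/-- The set `{𝔡'(i_k) - k : i = i_0, Δ_{i_{r+1}} ≪ Δ_{i_r}}` whose minimum is `𝔡(i)`. -/
def depthSet (d' : Fin D.n → ℕ) (i : Fin D.n) : Set ℤ :=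
  {z : ℤ | ∃ (k : ℕ) (c : ℕ → Fin D.n), c 0 = i ∧
    (∀ r < k, Segment.ll (D.iseg (c (r + 1))) (D.iseg (c r))) ∧
    z = (d' (c k) : ℤ) - (k : ℤ)}

/-- `d'` is the function `𝔡'` and `d` the depth function `𝔡` on `I ⊔ J`
(`𝔡'(i) = max{t : ⁻Δ_i ≪ Δ_{j_t}}`, `𝔡(i) = min{𝔡'(i_k) - k}`, `𝔡(j_t) = t`). -/
def DepthSpec (d' : Fin D.n → ℕ) (d : Fin D.n ⊕ Fin D.l → ℤ) : Prop :=
  (∀ i, IsGreatest (D.dPrimeSet i) (d' i)) ∧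
  (∀ i, IsLeast (D.depthSet d' i) (d (Sum.inl i))) ∧
  (∀ t : Fin D.l, d (Sum.inr t) = (t : ℤ))

/-- `σ` is the permutation of `I ⊔ J` whose disjoint cycles are `(i_1, …, i_s, j_t)`
where `{i_1 > … > i_s} ∪ {j_t} = 𝔡⁻¹(t)`:  an element `i ∈ I` is sent to the largest
element of `I` below it in its fiber of `𝔡`, or to the `J`-element of the fiber if
there is none; the `J`-element of a fiber is sent to the largest `I`-element of the
fiber, or to itself if there is none. -/
def SigmaSpec (d : Fin D.n ⊕ Fin D.l → ℤ) (σ : Equiv.Perm (Fin D.n ⊕ Fin D.l)) : Prop :=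
  (∀ i : Fin D.n,
    (∃ i' : Fin D.n,
        IsGreatest {i'' : Fin D.n | i'' < i ∧ d (Sum.inl i'') = d (Sum.inl i)} i' ∧
        σ (Sum.inl i) = Sum.inl i')
    ∨ ((¬ ∃ i'' : Fin D.n, i'' < i ∧ d (Sum.inl i'') = d (Sum.inl i)) ∧
        ∃ t : Fin D.l, (t : ℤ) = d (Sum.inl i) ∧ σ (Sum.inl i) = Sum.inr t)) ∧
  (∀ t : Fin D.l,
    (∃ i : Fin D.n,
        IsGreatest {i' : Fin D.n | d (Sum.inl i') = (t : ℤ)} i ∧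
        σ (Sum.inr t) = Sum.inl i)
    ∨ ((¬ ∃ i : Fin D.n, d (Sum.inl i) = (t : ℤ)) ∧ σ (Sum.inr t) = Sum.inr t))

/-- `e(Δ♣_x) ≠ e(Δ_x)`, i.e. the end point changes at `x`
(recall `Δ♣_x = Δ(b(Δ_x), e(Δ_{σ(x)}))`). -/
def breaksEnd (σ : Equiv.Perm (Fin D.n ⊕ Fin D.l)) (x : Fin D.n ⊕ Fin D.l) : Prop :=
  (D.segOf (σ x)).e ≠ (D.segOf x).e

/-- `vee` is the map `x ↦ x^∨`:  `x^∨ = σ^{-r}(x)` for the least `r ≥ 1` such that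
`e(Δ♣_{σ^{-r}(x)}) ≠ e(Δ_{σ^{-r}(x)})`, and `x^∨ = j_{𝔡(x)}` if no such `r` exists. -/
def VeeSpec (d : Fin D.n ⊕ Fin D.l → ℤ) (σ : Equiv.Perm (Fin D.n ⊕ Fin D.l))
    (vee : Fin D.n ⊕ Fin D.l → Fin D.n ⊕ Fin D.l) : Prop :=
  ∀ x : Fin D.n ⊕ Fin D.l,
    ((∃ r : ℕ, 1 ≤ r ∧ D.breaksEnd σ ((⇑σ.symm)^[r] x)) →
      ∃ r : ℕ, 1 ≤ r ∧ vee x = (⇑σ.symm)^[r] x ∧ D.breaksEnd σ ((⇑σ.symm)^[r] x) ∧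
        ∀ r' : ℕ, 1 ≤ r' → r' < r → ¬ D.breaksEnd σ ((⇑σ.symm)^[r'] x)) ∧
    ((¬ ∃ r : ℕ, 1 ≤ r ∧ D.breaksEnd σ ((⇑σ.symm)^[r] x)) →
      ∃ t : Fin D.l, (t : ℤ) = d x ∧ vee x = Sum.inr t)

/-- The multisegment `𝔪` of the data. -/
def mSeg : Multiset Segment := Multiset.map D.iseg Finset.univ.val

/-- The ladder multisegment `𝔩` of the data. -/
def lSeg : Multiset Segment := Multiset.map D.jseg Finset.univ.val

end KVData

theorem ncard_setOf_prod {α β : Type*} [Fintype α] [Finite β] (P : α × β → Prop) :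
    {p | P p}.ncard = ∑ a, {b | P (a, b)}.ncard := by
  classical
  have := Fintype.ofFinite β
  simp only [Set.ncard_eq_toFinset_card', Set.toFinset_ofPred, Finset.card_filter,
    Fintype.sum_prod_type]

theorem ncard_setOf_sum {α β : Type*} [Finite α] [Finite β] (P : α ⊕ β → Prop) :
    {x | P x}.ncard = {a | P (Sum.inl a)}.ncard + {b | P (Sum.inr b)}.ncard := by
  classical
  have := Fintype.ofFinite α
  have := Fintype.ofFinite β
  simp only [Set.ncard_eq_toFinset_card', Set.toFinset_ofPred, Finset.card_filter,
    Fintype.sum_sum_type]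

section LadderDepth

open Sum (inl inr)

variable {I J α β : Type*} [LinearOrder I] [LinearOrder J] [LinearOrder α] [LinearOrder β]

/-- `d : I → J` is the depth function of a multisegment indexed by `I`, in an order compatible with
it, over a ladder indexed by `J`, whose end points decrease; `b x` and `e x` are the begin and end
points of the segment at `x ∈ I ⊔ J`.  The depth, defined in the paper as a minimum over chains, is
encoded by the recursion it solves: `t ≤ 𝔡(i)` means that `Δ_i` lies weakly below `Δ_{j_t}` and that
`t < 𝔡(z)` whenever `Δ_z ≪ Δ_i`. -/
structure IsLadderDepth (b : I ⊕ J → α) (e : I ⊕ J → β) (d : I → J) : Prop where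
  order : ∀ i i', i' < i →
    b (inl i') < b (inl i) ∨ b (inl i') = b (inl i) ∧ e (inl i) ≤ e (inl i')
  ladder : StrictAnti fun t => e (inr t)
  le_depth_iff : ∀ t i, t ≤ d i ↔ (b (inl i) ≤ b (inr t) ∧ e (inl i) ≤ e (inr t)) ∧
    ∀ z, b (inl z) < b (inl i) → e (inl z) < e (inl i) → t < d z

/-- The depth on `I ⊔ J`, with `𝔡(j_t) = t`. -/
def fullDepth (d : I → J) : I ⊕ J → J := Sum.elim d id

/-- The elements of `I` that come after `x` in the cycle of its depth, read from `j_t` on.  In the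
lexicographic order on `I ⊔ J`, where `J` lies above `I`, the sequence `j_t, i_1, …, i_s` is
decreasing. -/
def later (d : I → J) (x : I ⊕ J) : Set I :=
  {i | toLex (inl i) < toLex x ∧ d i = fullDepth d x}

/-- `σ` cycles through each fiber of the depth in the order `j_t, i_1 > … > i_s`. -/
def IsDepthCycle (d : I → J) (σ : I ⊕ J → I ⊕ J) : Prop :=
  ∀ x, (∃ i, IsGreatest (later d x) i ∧ σ x = inl i) ∨
    (later d x = ∅ ∧ σ x = inr (fullDepth d x))

/-- The second entries of the pairs in `ν₁` and `ν₃` with first entry `i`: through them `σ` enters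
the block of end point `e(Δ_i)` in a cycle.  Elements of `J` start their cycle, so they count as
entering whatever their own end point. -/
def IsEntrance (b : I ⊕ J → α) (e : I ⊕ J → β) (σ : I ⊕ J → I ⊕ J) (i : I) (x : I ⊕ J) : Prop :=
  b (inl i) ≤ b x ∧ (x.isLeft → e x < e (σ x)) ∧ e (σ x) = e (inl i)

/-- The second entries of the pairs in `ν₂` with first entry `i`: through them `σ` leaves the block
of end point `e(Δ_i)` in a cycle. -/
def IsExit (b : I ⊕ J → α) (e : I ⊕ J → β) (σ : I ⊕ J → I ⊕ J) (i y : I) : Prop :=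
  b (inl i) < b (inl y) ∧ e (inl i) = e (inl y) ∧ e (inl y) < e (σ (inl y))

variable {b : I ⊕ J → α} {e : I ⊕ J → β} {d : I → J} {σ : I ⊕ J → I ⊕ J}

theorem mem_later_inl {i y : I} : y ∈ later d (inl i) ↔ y < i ∧ d y = d i :=
  and_congr_left' Sum.Lex.inl_lt_inl_iff

theorem mem_later_inr {t : J} {y : I} : y ∈ later d (inr t) ↔ d y = t :=
  and_iff_right (Sum.Lex.inl_lt_inr y t)

namespace IsDepthCycle

theorem fullDepth_apply (hσ : IsDepthCycle d σ) (x : I ⊕ J) :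
    fullDepth d (σ x) = fullDepth d x := by
  rcases hσ x with ⟨i, hi, hx⟩ | ⟨-, hx⟩
  · rw [hx]
    exact hi.1.2
  · rw [hx]
    rfl

end IsDepthCycle

namespace IsLadderDepth

/-! ### Depth and end points -/

theorem monotone_begin (h : IsLadderDepth b e d) : Monotone fun i => b (inl i) := by
  intro i i' hle
  rcases hle.lt_or_eq with hlt | rfl
  · exact (h.order i' i hlt).elim le_of_lt fun hbe => hbe.1.le
  · exact le_rfl

theorem depth_lt_depth (h : IsLadderDepth b e d) {i z : I} (hb : b (inl z) < b (inl i))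
    (he : e (inl z) < e (inl i)) : d i < d z :=
  ((h.le_depth_iff _ _).1 le_rfl).2 z hb he

theorem depth_le_depth (h : IsLadderDepth b e d) {i z : I} (hb : b (inl z) ≤ b (inl i))
    (he : e (inl z) ≤ e (inl i)) : d i ≤ d z := by
  obtain ⟨⟨hbt, het⟩, hlt⟩ := (h.le_depth_iff _ _).1 (le_refl (d i))
  exact (h.le_depth_iff _ _).2 ⟨⟨hb.trans hbt, he.trans het⟩,
    fun w hbw hew => hlt w (hbw.trans_le hb) (hew.trans_le he)⟩

theorem begin_le_ladder (h : IsLadderDepth b e d) : ∀ x, b x ≤ b (inr (fullDepth d x))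
  | inl i => ((h.le_depth_iff _ i).1 le_rfl).1.1
  | inr _ => le_rfl

theorem end_le_ladder (h : IsLadderDepth b e d) : ∀ x, e x ≤ e (inr (fullDepth d x))
  | inl i => ((h.le_depth_iff _ i).1 le_rfl).1.2
  | inr _ => le_rfl

/-- While the depth stays below `t`, the recursion provides a smaller segment whose depth is still
at most `t`. -/
theorem exists_depth_eq [WellFoundedLT I] (h : IsLadderDepth b e d) {t : J} (i : I)
    (hb : b (inl i) ≤ b (inr t)) (he : e (inl i) ≤ e (inr t)) (hd : d i < t) :
    ∃ z, b (inl z) < b (inl i) ∧ e (inl z) < e (inl i) ∧ d z = t := by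
  induction i using WellFoundedLT.induction with
  | ind i ih =>
    obtain ⟨w, hbw, hew, hdw⟩ :
        ∃ w, b (inl w) < b (inl i) ∧ e (inl w) < e (inl i) ∧ d w ≤ t := by
      simpa [hb, he] using mt (h.le_depth_iff t i).2 hd.not_ge
    rcases hdw.lt_or_eq with hlt | heq
    · obtain ⟨z, hbz, hez, hdz⟩ := ih w (h.monotone_begin.reflect_lt hbw) (hbw.le.trans hb)
        (hew.le.trans he) hlt
      exact ⟨z, hbz.trans hbw, hez.trans hew, hdz⟩
    · exact ⟨w, hbw, hew, heq⟩

theorem end_le_end_of_depth_eq (h : IsLadderDepth b e d) {i y : I} (hle : y ≤ i)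
    (hd : d y = d i) : e (inl i) ≤ e (inl y) := by
  rcases hle.lt_or_eq with hlt | rfl
  · rcases h.order i y hlt with hb | ⟨-, he⟩
    · exact not_lt.1 fun he => (h.depth_lt_depth hb he).ne' hd
    · exact he
  · exact le_rfl

theorem begin_le_of_mem_later (h : IsLadderDepth b e d) {x : I ⊕ J} {i : I}
    (hi : i ∈ later d x) : b (inl i) ≤ b x := by
  rcases x with y | t
  · exact h.monotone_begin (mem_later_inl.1 hi).1.le
  · exact mem_later_inr.1 hi ▸ h.begin_le_ladder (inl i)

theorem mem_later_of_begin_lt (h : IsLadderDepth b e d) {x : I ⊕ J} {i : I}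
    (hb : b (inl i) < b x) (hd : d i = fullDepth d x) : i ∈ later d x := by
  rcases x with y | t
  · exact mem_later_inl.2 ⟨h.monotone_begin.reflect_lt hb, hd⟩
  · exact mem_later_inr.2 hd

theorem end_apply_le_of_mem_later (h : IsLadderDepth b e d) (hσ : IsDepthCycle d σ)
    {x : I ⊕ J} {i : I} (hi : i ∈ later d x) : e (σ x) ≤ e (inl i) := by
  rcases hσ x with ⟨y, hy, hx⟩ | ⟨hempty, -⟩
  · rw [hx]
    exact h.end_le_end_of_depth_eq (hy.2 hi) (hi.2.trans hy.1.2.symm)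
  · simp [hempty] at hi

theorem end_le_apply (h : IsLadderDepth b e d) (hσ : IsDepthCycle d σ) (i : I) :
    e (inl i) ≤ e (σ (inl i)) := by
  rcases hσ (inl i) with ⟨y, hy, hx⟩ | ⟨-, hx⟩
  · obtain ⟨hlt, hd⟩ := mem_later_inl.1 hy.1
    rw [hx]
    exact h.end_le_end_of_depth_eq hlt.le hd
  · rw [hx]
    exact h.end_le_ladder (inl i)

/-! ### Entrances and exits -/

theorem injOn_fullDepth_entrances (h : IsLadderDepth b e d) (hσ : IsDepthCycle d σ) (i : I) :
    Set.InjOn (fullDepth d) {x | IsEntrance b e σ i x} := by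
  intro x hx y hy hd
  wlog hlt : toLex x < toLex y generalizing x y
  · rcases (not_lt.1 hlt).lt_or_eq with hlt' | heq
    · exact (this hy hx hd.symm hlt').symm
    · exact (toLex.injective heq).symm
  rcases x with z | t
  · have hle := h.end_apply_le_of_mem_later hσ (x := y) (i := z) ⟨hlt, hd⟩
    exact absurd (hy.2.2 ▸ hle) (not_le.2 (hx.2.2 ▸ hx.2.1 rfl))
  · rcases y with z | s
    · exact absurd hlt Sum.Lex.not_inr_lt_inl
    · exact congrArg inr hd

theorem injOn_depth_exits (h : IsLadderDepth b e d) (hσ : IsDepthCycle d σ) (i : I) :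
    Set.InjOn d (insert i {y | IsExit b e σ i y}) := by
  intro x hx y hy hd
  wlog hlt : x < y generalizing x y
  · rcases (not_lt.1 hlt).lt_or_eq with hlt' | heq
    · exact (this hy hx hd.symm hlt').symm
    · exact heq.symm
  have hex : e (inl x) = e (inl i) := hx.elim (fun heq => heq ▸ rfl) fun hx => hx.2.1.symm
  rcases hy with rfl | ⟨-, hey, hlast⟩
  · rcases hx with rfl | ⟨hb, -⟩
    · rfl
    · exact absurd (h.monotone_begin hlt.le) hb.not_ge
  · have hle := h.end_apply_le_of_mem_later hσ (mem_later_inl.2 ⟨hlt, hd⟩)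
    exact absurd (hle.trans_eq (hex.trans hey)) hlast.not_ge

/-- The entrance is the last element before `y` whose end point is not yet that of the block. -/
theorem exists_isEntrance [Finite I] [Finite J] (h : IsLadderDepth b e d) (hσ : IsDepthCycle d σ)
    {i y : I} (hb : b (inl i) ≤ b (inl y)) (he : e (inl y) = e (inl i)) :
    ∃ x, IsEntrance b e σ i x ∧ fullDepth d x = d y := by
  obtain ⟨x, ⟨hyx, hx⟩, hmin⟩ := Set.Finite.exists_minimalFor toLex
    {x | y ∈ later d x ∧ (x.isLeft → e x < e (inl i))} (Set.toFinite _)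
    ⟨inr (d y), mem_later_inr.2 rfl, by simp⟩
  have hσx : e (σ x) = e (inl i) := by
    rcases hσ x with ⟨z, hz, hxz⟩ | ⟨hempty, -⟩
    · refine le_antisymm ((h.end_apply_le_of_mem_later hσ hyx).trans_eq he) (not_lt.1 fun hlt => ?_)
      rw [hxz] at hlt
      have hyz : y < z := (hz.2 hyx).lt_of_ne fun heq => (heq ▸ hlt).ne he
      have hmem : y ∈ later d (inl z) := mem_later_inl.2 ⟨hyz, hyx.2.trans hz.1.2.symm⟩
      exact hz.1.1.not_ge (hmin ⟨hmem, fun _ => hlt⟩ hz.1.1.le)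
    · simp [hempty] at hyx
  exact ⟨x, ⟨hb.trans (h.begin_le_of_mem_later hyx), hσx ▸ hx, hσx⟩, hyx.2.symm⟩

/-- Otherwise a segment `≪ Δ_i` in the cycle of `x` would come after `x`, with too small an end
point. -/
theorem depth_le_of_isEntrance [WellFoundedLT I] (h : IsLadderDepth b e d)
    (hσ : IsDepthCycle d σ) {i : I} {x : I ⊕ J} (hx : IsEntrance b e σ i x) :
    fullDepth d x ≤ d i := by
  obtain ⟨hb, -, he⟩ := hx
  have het : e (inl i) ≤ e (inr (fullDepth d x)) := by
    rw [← he, ← hσ.fullDepth_apply x]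
    exact h.end_le_ladder (σ x)
  by_contra! hlt
  obtain ⟨z, hbz, hez, hdz⟩ := h.exists_depth_eq i (hb.trans (h.begin_le_ladder x)) het hlt
  have hle := h.end_apply_le_of_mem_later hσ (h.mem_later_of_begin_lt (hbz.trans_le hb) hdz)
  exact absurd (he ▸ hle) hez.not_ge

theorem exists_end_lt_apply [WellFoundedLT I] (h : IsLadderDepth b e d) (hσ : IsDepthCycle d σ)
    {y : I} (hy : e (inl y) < e (inr (d y))) :
    ∃ z, d z = d y ∧ e (inl z) = e (inl y) ∧ e (inl z) < e (σ (inl z)) := by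
  obtain ⟨z, ⟨hdz, hez⟩, hmin⟩ := exists_minimal_of_wellFoundedLT
    (fun z => d z = d y ∧ e (inl z) = e (inl y)) ⟨y, rfl, rfl⟩
  refine ⟨z, hdz, hez, (h.end_le_apply hσ z).lt_of_ne fun heq => ?_⟩
  rcases hσ (inl z) with ⟨w, hw, hzw⟩ | ⟨-, hzt⟩
  · obtain ⟨hlt, hdw⟩ := mem_later_inl.1 hw.1
    rw [hzw] at heq
    exact hlt.not_ge (hmin ⟨hdw.trans hdz, heq.symm.trans hez⟩ hlt.le)
  · rw [hzt] at heq
    exact hy.ne (hez.symm.trans (heq.trans (congrArg (e ∘ inr) hdz)))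

theorem exists_isExit [WellFoundedLT I] (h : IsLadderDepth b e d) (hσ : IsDepthCycle d σ)
    {i : I} {x : I ⊕ J} (hx : IsEntrance b e σ i x) (hd : fullDepth d x < d i) :
    ∃ y, IsExit b e σ i y ∧ d y = fullDepth d x := by
  have hblock : e (σ x) < e (inr (fullDepth d (σ x))) := by
    rw [hx.2.2, hσ.fullDepth_apply]
    exact (h.end_le_ladder (inl i)).trans_lt (h.ladder hd)
  obtain ⟨y, hy⟩ : ∃ y, σ x = inl y := by
    rcases hσ x with ⟨y, -, hy⟩ | ⟨-, hy⟩
    · exact ⟨y, hy⟩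
    · exact absurd hblock (by simp [hy, fullDepth])
  have hdy : d y = fullDepth d x := by
    rw [← hσ.fullDepth_apply, hy]
    rfl
  have hey : e (inl y) = e (inl i) := hy ▸ hx.2.2
  rw [hy] at hblock
  obtain ⟨z, hdz, hez, hlast⟩ := h.exists_end_lt_apply hσ hblock
  have hbz : b (inl i) < b (inl z) := by
    by_contra! hle
    exact ((h.depth_le_depth hle (hez.trans hey).le).trans_eq (hdz.trans hdy)).not_gt hd
  exact ⟨z, ⟨hbz, (hez.trans hey).symm, hlast⟩, hdz.trans hdy⟩

theorem image_fullDepth_entrances [Finite I] [Finite J] (h : IsLadderDepth b e d)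
    (hσ : IsDepthCycle d σ) (i : I) :
    fullDepth d '' {x | IsEntrance b e σ i x} = d '' insert i {y | IsExit b e σ i y} := by
  apply Set.Subset.antisymm
  · rintro - ⟨x, hx, rfl⟩
    rcases (h.depth_le_of_isEntrance hσ hx).lt_or_eq with hlt | heq
    · obtain ⟨y, hy, hd⟩ := h.exists_isExit hσ hx hlt
      exact ⟨y, Or.inr hy, hd⟩
    · exact ⟨i, Or.inl rfl, heq.symm⟩
  · rintro - ⟨y, rfl | hy, rfl⟩
    · exact h.exists_isEntrance hσ le_rfl rfl
    · exact h.exists_isEntrance hσ hy.1.le hy.2.1.symm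

theorem ncard_entrances [Finite I] [Finite J] (h : IsLadderDepth b e d) (hσ : IsDepthCycle d σ)
    (i : I) : {x | IsEntrance b e σ i x}.ncard = {y | IsExit b e σ i y}.ncard + 1 := by
  have hi : i ∉ {y | IsExit b e σ i y} := fun hi => lt_irrefl _ hi.1
  rw [← (h.injOn_fullDepth_entrances hσ i).ncard_image, h.image_fullDepth_entrances hσ,
    (h.injOn_depth_exits hσ i).ncard_image, Set.ncard_insert_of_notMem hi]

end IsLadderDepth

theorem D_invariant_eq_card_general [Finite I] [Finite J] (h : IsLadderDepth b e d)
    (hσ : IsDepthCycle d σ) :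
    (({p : I × I | b (inl p.1) ≤ b (inl p.2) ∧ e (inl p.2) < e (σ (inl p.2)) ∧
        e (σ (inl p.2)) = e (inl p.1)}.ncard : ℤ)
      - ({p : I × I | b (inl p.1) < b (inl p.2) ∧ e (inl p.1) = e (inl p.2) ∧
        e (inl p.2) < e (σ (inl p.2))}.ncard : ℤ)
      + ({p : I × J | b (inl p.1) ≤ b (inr p.2) ∧
        e (σ (inr p.2)) = e (inl p.1)}.ncard : ℤ)) = (Nat.card I : ℤ) := by
  have := Fintype.ofFinite I
  have hcount (i : I) := h.ncard_entrances hσ i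
  simp only [ncard_setOf_sum, IsEntrance, IsExit, Sum.isLeft_inl, Sum.isLeft_inr, forall_const,
    Bool.false_eq_true, IsEmpty.forall_iff, true_and] at hcount
  have hsum := Fintype.sum_congr _ _ hcount
  simp only [Finset.sum_add_distrib, Finset.sum_const, Finset.card_univ, smul_eq_mul,
    mul_one] at hsum
  rw [ncard_setOf_prod, ncard_setOf_prod, ncard_setOf_prod, Nat.card_eq_fintype_card]
  lia

end LadderDepth

namespace KVData

variable {D : KVData} {d' : Fin D.n → ℕ} {d : Fin D.n ⊕ Fin D.l → ℤ}
  {σ : Equiv.Perm (Fin D.n ⊕ Fin D.l)}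

theorem DepthSpec.le_dPrime_iff (hdep : D.DepthSpec d' d) (t : Fin D.l) (i : Fin D.n) :
    (t : ℕ) ≤ d' i ↔ (D.iseg i).b ≤ (D.jseg t).b ∧ (D.iseg i).e ≤ (D.jseg t).e := by
  constructor
  · intro hle
    obtain ⟨hl, hb, he⟩ := (hdep.1 i).1
    simp only [Segment.shiftDown] at hb he
    have hle' : t ≤ ⟨d' i, hl⟩ := hle
    rcases hle'.lt_or_eq with hlt | heq
    · obtain ⟨hb', he'⟩ := D.ladder _ _ hlt
      omega
    · rw [heq]
      omega
  · exact fun ⟨hb, he⟩ => (hdep.1 i).2 ⟨t.2, (sub_one_lt _).trans_le hb, (sub_one_lt _).trans_le he⟩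

theorem DepthSpec.le_depth_iff (hdep : D.DepthSpec d' d) (z : ℤ) (i : Fin D.n) :
    z ≤ d (Sum.inl i) ↔
      z ≤ d' i ∧ ∀ w, (D.iseg w).ll (D.iseg i) → z < d (Sum.inl w) := by
  constructor
  · intro hz
    refine ⟨hz.trans ((hdep.2.1 i).2 ⟨0, fun _ => i, rfl, by simp, by simp⟩), fun w hw => ?_⟩
    obtain ⟨k, c, hc0, hc, hk⟩ := (hdep.2.1 w).1
    have hmem : (d' (c k) : ℤ) - (k + 1 : ℕ) ∈ D.depthSet d' i := by
      refine ⟨k + 1, fun r => Nat.casesOn r i c, rfl, ?_, rfl⟩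
      rintro (_ | r) hr
      · simpa [hc0] using hw
      · exact hc r (by omega)
    have hdi := (hdep.2.1 i).2 hmem
    push_cast at hdi
    omega
  · rintro ⟨hz, hlt⟩
    obtain ⟨_ | k, c, rfl, hc, hk⟩ := (hdep.2.1 i).1
    · simpa [hk] using hz
    · have hmem : (d' (c (k + 1)) : ℤ) - k ∈ D.depthSet d' (c 1) :=
        ⟨k, fun r => c (r + 1), rfl, fun r hr => hc (r + 1) (by omega), rfl⟩
      have hd_tail := (hdep.2.1 (c 1)).2 hmem
      have hz_lt := hlt (c 1) (hc 0 k.succ_pos)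
      push_cast at hk
      omega

theorem SigmaSpec.exists_ladder_index (hσ : D.SigmaSpec d σ) (i : Fin D.n) :
    ∃ t : Fin D.l, (t : ℤ) = d (Sum.inl i) := by
  induction i using WellFoundedLT.induction with
  | ind i ih =>
    rcases hσ.1 i with ⟨i', hi', -⟩ | ⟨-, t, ht, -⟩
    · obtain ⟨t, ht⟩ := ih i' hi'.1.1
      exact ⟨t, ht.trans hi'.1.2⟩
    · exact ⟨t, ht⟩

theorem DepthSpec.isLadderDepth (hdep : D.DepthSpec d' d) {δ : Fin D.n → Fin D.l}
    (hδ : ∀ i, (δ i : ℤ) = d (Sum.inl i)) :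
    IsLadderDepth (fun x => (D.segOf x).b) (fun x => (D.segOf x).e) δ where
  order := D.iOrder
  ladder t t' hlt := (D.ladder t t' hlt).2
  le_depth_iff t i := by
    have hle := hdep.le_depth_iff t i
    simp only [← hδ, Nat.cast_le, Nat.cast_lt, Fin.val_fin_le, Fin.val_fin_lt,
      hdep.le_dPrime_iff] at hle
    simpa only [Segment.ll, and_imp] using! hle

theorem SigmaSpec.isDepthCycle (hσ : D.SigmaSpec d σ) {δ : Fin D.n → Fin D.l}
    (hδ : ∀ i, (δ i : ℤ) = d (Sum.inl i)) : IsDepthCycle δ σ := by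
  have hδ_inj {i z} : δ z = δ i ↔ d (Sum.inl z) = d (Sum.inl i) := by
    rw [← hδ, ← hδ, Nat.cast_inj, Fin.val_inj]
  have hδ_eq {i} {t : Fin D.l} : δ i = t ↔ d (Sum.inl i) = t := by
    rw [← hδ, Nat.cast_inj, Fin.val_inj]
  rintro (i | t)
  · have hlater : later δ (Sum.inl i) = {z | z < i ∧ d (Sum.inl z) = d (Sum.inl i)} := by
      ext z
      rw [mem_later_inl, hδ_inj, Set.mem_ofPred_eq]
    rcases hσ.1 i with ⟨y, hy, hs⟩ | ⟨hne, t, ht, hs⟩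
    · exact Or.inl ⟨y, hlater ▸ hy, hs⟩
    · exact Or.inr ⟨hlater.trans (Set.not_nonempty_iff_eq_empty.1 hne),
        hs.trans (congrArg Sum.inr (hδ_eq.2 ht.symm).symm)⟩
  · have hlater : later δ (Sum.inr t) = {z | d (Sum.inl z) = t} := by
      ext z
      rw [mem_later_inr, hδ_eq, Set.mem_ofPred_eq]
    rcases hσ.2 t with ⟨y, hy, hs⟩ | ⟨hne, hs⟩
    · exact Or.inl ⟨y, hlater ▸ hy, hs⟩
    · exact Or.inr ⟨hlater.trans (Set.not_nonempty_iff_eq_empty.1 hne), hs⟩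

end KVData

/-- Let `(𝔩,𝔪)` be a permissible pair with the algorithm notations in
place.  Then `D(𝔩,𝔪) = |𝔪|`, i.e. `|ν(𝔩,𝔪)₁| - |ν(𝔩,𝔪)₂| + |ν(𝔩,𝔪)₃|` equals the
number of segments of `𝔪` (recall `e(Δ♣_x) = e(Δ_{σ(x)})` and `b(Δ♣_x) = b(Δ_x)`). -/
theorem D_invariant_eq_card (D : KVData) (d' : Fin D.n → ℕ)
    (d : Fin D.n ⊕ Fin D.l → ℤ) (σ : Equiv.Perm (Fin D.n ⊕ Fin D.l))
    (hdep : D.DepthSpec d' d) (hσ : D.SigmaSpec d σ) :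
    (({p : Fin D.n × Fin D.n |
        (D.iseg p.1).b ≤ (D.iseg p.2).b ∧
        (D.iseg p.2).e < (D.segOf (σ (Sum.inl p.2))).e ∧
        (D.segOf (σ (Sum.inl p.2))).e = (D.iseg p.1).e}.ncard : ℤ)
      - ({p : Fin D.n × Fin D.n |
        (D.iseg p.1).b < (D.iseg p.2).b ∧
        (D.iseg p.1).e = (D.iseg p.2).e ∧
        (D.iseg p.2).e < (D.segOf (σ (Sum.inl p.2))).e}.ncard : ℤ)
      + ({p : Fin D.n × Fin D.l |
        (D.iseg p.1).b ≤ (D.jseg p.2).b ∧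
        (D.segOf (σ (Sum.inr p.2))).e = (D.iseg p.1).e}.ncard : ℤ)) = (D.n : ℤ) := by
  choose δ hδ using hσ.exists_ladder_index
  exact (D_invariant_eq_card_general (hdep.isLadderDepth hδ) (hσ.isDepthCycle hδ)).trans
    (congrArg _ (Nat.card_fin D.n))
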